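/- Let f : ℝ² → ℝ be of class C² satisfying (i) D²f(p)(q,q) > 0 for all p, q ∈ ℝ² with q ≠ 0, and (ii) there is a constant Λ > 0 with |D²f(p)| ≤ Λ/(1+|p|) for all p ∈ ℝ². Let ρ : [1,∞) → (0,∞) be of class C¹ with ρ'(t) > 0 and (d/dt)[ρ(t)/√t] ≤ 0 for all t ≥ 1. Let u ∈ C²(ℝ²) be an entire solution of div[Df(∇u)] = 0 such that Γ₁^{−1/2} · ρ²(Γ₁)/ρ'(Γ₁) ≤ c · Γ₂^{1/2} holds on ℝ² with some finite constant c, where Γ_i := 1 + |∂_i u|² for i = 1, 2. Then u is an affine function. -/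

import Mathlib

open Real MeasureTheory Metric
open scoped ENNReal

noncomputable section

/-- `ℝ²` with its Euclidean structure. -/
abbrev E2 : Type := EuclideanSpace ℝ (Fin 2)

/-- The `i`-th standard basis vector of `ℝ²`. -/
def ee (i : Fin 2) : E2 := EuclideanSpace.single i 1

/-- The Hessian bilinear form `D²f(p)(q,q)`. -/
def Hess (f : E2 → ℝ) (p q : E2) : ℝ := iteratedFDeriv ℝ 2 f p ![q, q]

/-- The partial derivative `∂ᵢu(x)`. -/
def pd (u : E2 → ℝ) (i : Fin 2) (x : E2) : ℝ := fderiv ℝ u x (ee i)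

/-- The equation `div [Df(∇u)] = 0`, i.e. `∑ i, ∂ᵢ[(∂f/∂pᵢ)(∇u(x))] = 0` on `ℝ²`. -/
def solves (f u : E2 → ℝ) : Prop :=
  ∀ x : E2, ∑ i : Fin 2, fderiv ℝ (fun y => fderiv ℝ f (gradient u y) (ee i)) x (ee i) = 0

/-! Differentiating the equation in a direction `e` shows that `w = ∂ₑu` solves the linear equation
`div [D²f(∇u) ∇w] = 0`. Testing it with `η² g(w)`, where `g` is increasing, gives by Cauchy–Schwarz
`∫ η² Q ≤ C ∫ |η| √Q |∇η|` for the density `Q = g'(w) D²f(∇u)(∇w, ∇w)`, provided that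
`g(w)² ≤ c (1 + |∇u|) g'(w)`: the factor `1 + |∇u|` is compensated by the decay of `D²f`. In the
plane the Dirichlet integrals of rescaled cut-off functions stay bounded, so such a `Q` is
integrable, and the inequality, whose right-hand side only sees the region where the cut-off varies,
then forces `Q = 0`. Hence `∇w = 0`, and the equation itself annihilates the remaining second
derivative. The choice `g(t) = ρ(1 + t²) t / √(1 + t²)` turns the assumption on `ρ` into the
condition on `g`. -/

open Filter Module Topology
open scoped InnerProductSpace

section CompactSupport

variable {E : Type*} [NormedAddCommGroup E] [NormedSpace ℝ E] [MeasurableSpace E] [BorelSpace E]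
  {μ : Measure E}

theorem hasDerivAt_integral_translate_mul [IsFiniteMeasureOnCompacts μ] {V ψ : E → ℝ}
    (hV : ContDiff ℝ 1 V) (hψ : Continuous ψ) (hψc : HasCompactSupport ψ) (e : E) :
    HasDerivAt (fun h : ℝ => ∫ x, V (x + h • e) * ψ x ∂μ) (∫ x, fderiv ℝ V x e * ψ x ∂μ) 0 := by
  have := hV.continuous
  have := hV.continuous_fderiv one_ne_zero
  have hcont : Continuous fun p : E × ℝ => fderiv ℝ V (p.1 + p.2 • e) e * ψ p.1 := by fun_prop
  obtain ⟨C, hC⟩ := (hψc.isCompact.prod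
    (isCompact_Icc (a := (-1 : ℝ)) (b := 1))).exists_bound_of_continuousOn hcont.continuousOn
  have hderiv (x : E) (h : ℝ) : HasDerivAt (fun h : ℝ => V (x + h • e) * ψ x)
      (fderiv ℝ V (x + h • e) e * ψ x) h := by
    have hline : HasDerivAt (fun h : ℝ => x + h • e) e h := by
      simpa using ((hasDerivAt_id h).smul_const e).const_add x
    exact ((hV.differentiable one_ne_zero _).hasFDerivAt.comp_hasDerivAt h hline).mul_const _
  have hbound (x : E) (h : ℝ) (hh : h ∈ Set.Icc (-1 : ℝ) 1) :
      ‖fderiv ℝ V (x + h • e) e * ψ x‖ ≤ (tsupport ψ).indicator (fun _ => C) x := by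
    by_cases hx : x ∈ tsupport ψ
    · simpa only [Set.indicator_of_mem hx] using hC (x, h) ⟨hx, hh⟩
    · simp [Set.indicator_of_notMem hx, image_eq_zero_of_notMem_tsupport hx]
  have hmeas {F : E → ℝ} (hF : Continuous F) : AEStronglyMeasurable (fun x => F x * ψ x) μ :=
    ((hF.mul hψ).stronglyMeasurable_of_hasCompactSupport hψc.mul_left).aestronglyMeasurable
  have hbound_int : Integrable ((tsupport ψ).indicator fun _ => C) μ :=
    (integrable_indicator_iff (isClosed_tsupport ψ).measurableSet).2
      (integrableOn_const hψc.isCompact.measure_lt_top.ne)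
  have hint : Integrable (fun x => V (x + (0 : ℝ) • e) * ψ x) μ :=
    Continuous.integrable_of_hasCompactSupport (by fun_prop) hψc.mul_left
  have key := hasDerivAt_integral_of_dominated_loc_of_deriv_le
    (F := fun h x => V (x + h • e) * ψ x) (F' := fun h x => fderiv ℝ V (x + h • e) e * ψ x)
    (Icc_mem_nhds (show (-1 : ℝ) < 0 by norm_num) zero_lt_one)
    (.of_forall fun h => hmeas (F := fun x => V (x + h • e)) (by fun_prop)) hint
    (hmeas (F := fun x => fderiv ℝ V (x + (0 : ℝ) • e) e) (by fun_prop))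
    (.of_forall fun x h hh => hbound x h hh) hbound_int (.of_forall fun x h _ => hderiv x h)
  simpa only [zero_smul, add_zero] using key.2

variable [FiniteDimensional ℝ E] [μ.IsAddHaarMeasure]

theorem integral_mul_fderiv_eq_neg_of_hasCompactSupport {V φ : E → ℝ} (hV : ContDiff ℝ 1 V)
    (hφ : ContDiff ℝ 1 φ) (hφc : HasCompactSupport φ) (v : E) :
    ∫ x, V x * fderiv ℝ φ x v ∂μ = -∫ x, fderiv ℝ V x v * φ x ∂μ := by
  have := hV.continuous
  have := hφ.continuous
  have := hV.continuous_fderiv one_ne_zero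
  have := hφ.continuous_fderiv one_ne_zero
  refine integral_mul_fderiv_eq_neg_fderiv_mul_of_integrable ?_ ?_ ?_
    (fun x _ => hV.differentiable one_ne_zero x) (fun x _ => hφ.differentiable one_ne_zero x)
  · exact Continuous.integrable_of_hasCompactSupport (by fun_prop) hφc.mul_left
  · exact Continuous.integrable_of_hasCompactSupport (by fun_prop) (hφc.fderiv_apply ℝ v).mul_left
  · exact Continuous.integrable_of_hasCompactSupport (by fun_prop) hφc.mul_left

variable {ι : Type*} [Fintype ι] {V : ι → E → ℝ} {v : ι → E}

theorem sum_integral_mul_fderiv_eq_zero_of_div_eq_zero (hV : ∀ i, ContDiff ℝ 1 (V i))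
    (hdiv : ∀ x, ∑ i, fderiv ℝ (V i) x (v i) = 0) {φ : E → ℝ} (hφ : ContDiff ℝ 1 φ)
    (hφc : HasCompactSupport φ) :
    ∑ i, ∫ x, V i x * fderiv ℝ φ x (v i) ∂μ = 0 := by
  have := hφ.continuous
  have (i : ι) := (hV i).continuous_fderiv one_ne_zero
  have hint (i : ι) : Integrable (fun x => fderiv ℝ (V i) x (v i) * φ x) μ :=
    Continuous.integrable_of_hasCompactSupport (by fun_prop) hφc.mul_left
  simp_rw [integral_mul_fderiv_eq_neg_of_hasCompactSupport (hV _) hφ hφc, Finset.sum_neg_distrib]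
  rw [← integral_finsetSum _ fun i _ => hint i]
  simp_rw [← Finset.sum_mul, hdiv, zero_mul, integral_zero, neg_zero]

-- Since `φ` is only `C¹`, the derivative in direction `e` cannot be moved onto `∂ᵢφ`; instead the
-- identity for the translated field `V (· + h • e)` is differentiated in `h`.
theorem integral_sum_fderiv_mul_fderiv_eq_zero_of_div_eq_zero (hV : ∀ i, ContDiff ℝ 1 (V i))
    (hdiv : ∀ x, ∑ i, fderiv ℝ (V i) x (v i) = 0) {φ : E → ℝ} (hφ : ContDiff ℝ 1 φ)
    (hφc : HasCompactSupport φ) (e : E) :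
    ∫ x, ∑ i, fderiv ℝ (V i) x e * fderiv ℝ φ x (v i) ∂μ = 0 := by
  have := hφ.continuous_fderiv one_ne_zero
  have (i : ι) := (hV i).continuous_fderiv one_ne_zero
  have htranslate (h : ℝ) : ∑ i, ∫ x, V i (x + h • e) * fderiv ℝ φ x (v i) ∂μ = 0 :=
    sum_integral_mul_fderiv_eq_zero_of_div_eq_zero (V := fun i x => V i (x + h • e))
      (fun i => (hV i).comp (contDiff_id.add contDiff_const))
      (fun x => by simp only [fderiv_comp_add_right, hdiv]) hφ hφc
  have hderiv := HasDerivAt.fun_sum (u := Finset.univ) fun i _ =>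
    hasDerivAt_integral_translate_mul (μ := μ) (hV i) (by fun_prop) (hφc.fderiv_apply ℝ (v i)) e
  simp_rw [htranslate] at hderiv
  have hint (i : ι) : Integrable (fun x => fderiv ℝ (V i) x e * fderiv ℝ φ x (v i)) μ :=
    Continuous.integrable_of_hasCompactSupport (by fun_prop) (hφc.fderiv_apply ℝ (v i)).mul_left
  rw [integral_finsetSum _ fun i _ => hint i]
  exact hderiv.unique (hasDerivAt_const _ _)

end CompactSupport

section Cutoff

variable {E : Type*} [NormedAddCommGroup E] [NormedSpace ℝ E]

/-- `η` is a `C¹` cut-off function of radius `R`: compactly supported, bounded by `1` in absolute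
value, and equal to `1` on the open ball of radius `R` around the origin. -/
structure IsCutoff (R : ℝ) (η : E → ℝ) : Prop where
  contDiff : ContDiff ℝ 1 η
  hasCompactSupport : HasCompactSupport η
  abs_le_one : ∀ x, |η x| ≤ 1
  eq_one_of_mem_ball : ∀ x ∈ ball (0 : E) R, η x = 1

theorem IsCutoff.fderiv_eq_zero_of_mem_ball {R : ℝ} {η : E → ℝ} (hη : IsCutoff R η) {x : E}
    (hx : x ∈ ball (0 : E) R) : fderiv ℝ η x = 0 := by
  have : η =ᶠ[𝓝 x] fun _ => 1 := by
    filter_upwards [isOpen_ball.mem_nhds hx] using hη.eq_one_of_mem_ball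
  rw [this.fderiv_eq, fderiv_const_apply]

variable [FiniteDimensional ℝ E]

theorem isCutoff_rescaled_contDiffBump (θ : ContDiffBump (0 : E)) {R : ℝ} (hR : 0 < R) :
    IsCutoff (R * θ.rIn) fun x => θ (R⁻¹ • x) where
  contDiff := θ.contDiff.comp (contDiff_const_smul _)
  hasCompactSupport := θ.hasCompactSupport.comp_smul (inv_ne_zero hR.ne')
  abs_le_one x := abs_le.2 ⟨by linarith [θ.nonneg (x := R⁻¹ • x)], θ.le_one⟩
  eq_one_of_mem_ball x hx := by
    apply θ.one_of_mem_closedBall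
    rw [mem_closedBall_zero_iff, norm_smul, norm_inv, Real.norm_of_nonneg hR.le,
      inv_mul_le_iff₀ hR]
    exact (mem_ball_zero_iff.1 hx).le

variable [MeasurableSpace E] [BorelSpace E] (μ : Measure E) [μ.IsAddHaarMeasure]

theorem integral_sq_norm_fderiv_comp_inv_smul (η : E → ℝ) {R : ℝ} (hR : 0 ≤ R) :
    ∫ x, ‖fderiv ℝ (fun y => η (R⁻¹ • y)) x‖ ^ 2 ∂μ
      = R⁻¹ ^ 2 * R ^ finrank ℝ E * ∫ x, ‖fderiv ℝ η x‖ ^ 2 ∂μ := by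
  have hscale (x : E) : ‖fderiv ℝ (fun y => η (R⁻¹ • y)) x‖ ^ 2
      = R⁻¹ ^ 2 * ‖fderiv ℝ η (R⁻¹ • x)‖ ^ 2 := by
    rw [fderiv_comp_smul, norm_smul, mul_pow, Real.norm_eq_abs, sq_abs]
  simp_rw [hscale, integral_const_mul]
  rw [Measure.integral_comp_inv_smul_of_nonneg μ (fun y => ‖fderiv ℝ η y‖ ^ 2) hR, smul_eq_mul,
    mul_assoc]

theorem exists_isCutoff_integral_sq_norm_fderiv_le (hE : finrank ℝ E ≤ 2) :
    ∃ D : ℝ, ∀ R : ℝ, 1 ≤ R →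
      ∃ η : E → ℝ, IsCutoff R η ∧ ∫ x, ‖fderiv ℝ η x‖ ^ 2 ∂μ ≤ D := by
  let θ : ContDiffBump (0 : E) := ⟨1, 2, by norm_num, by norm_num⟩
  refine ⟨∫ x, ‖fderiv ℝ θ x‖ ^ 2 ∂μ, fun R hR => ⟨fun x => θ (R⁻¹ • x), ?_, ?_⟩⟩
  · simpa only [θ, mul_one] using isCutoff_rescaled_contDiffBump θ (by positivity : 0 < R)
  · rw [integral_sq_norm_fderiv_comp_inv_smul μ θ (by positivity)]
    have hfactor : R⁻¹ ^ 2 * R ^ finrank ℝ E ≤ 1 := by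
      rw [inv_pow, inv_mul_le_iff₀ (by positivity), mul_one]
      exact pow_le_pow_right₀ hR hE
    exact mul_le_of_le_one_left (integral_nonneg fun x => sq_nonneg _) hfactor

end Cutoff

section Liouville

theorem integrable_sq_mul_of_hasCompactSupport {X : Type*} [TopologicalSpace X] [MeasurableSpace X]
    [BorelSpace X] {μ : Measure X} [IsFiniteMeasureOnCompacts μ] {Q η : X → ℝ} (hQ : Continuous Q)
    (hη : Continuous η) (hηc : HasCompactSupport η) : Integrable (fun x => η x ^ 2 * Q x) μ :=
  Continuous.integrable_of_hasCompactSupport (by fun_prop)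
    ((hηc.comp_left (g := fun t : ℝ => t ^ 2) (by simp)).mul_right)

variable {E : Type*} [NormedAddCommGroup E] [NormedSpace ℝ E] [MeasurableSpace E] [BorelSpace E]
  {μ : Measure E}

/-- The density `Q` satisfies a Caccioppoli inequality with constant `C`. This is the form in which
the energy estimate for an elliptic equation enters the Liouville argument: by Young's inequality
it contains the usual bound `∫ η² Q ≤ C² ∫ |∇η|²`, and it keeps track of the fact that the
right-hand side only involves `Q` where `∇η ≠ 0`. -/
def IsCaccioppoli (μ : Measure E) (Q : E → ℝ) (C : ℝ) : Prop :=
  ∀ η : E → ℝ, ContDiff ℝ 1 η → HasCompactSupport η →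
    ∫ x, η x ^ 2 * Q x ∂μ ≤ C * ∫ x, |η x| * √(Q x) * ‖fderiv ℝ η x‖ ∂μ

theorem mul_abs_mul_sqrt_mul_le {q : ℝ} (hq : 0 ≤ q) (C a d : ℝ) {ε : ℝ} (hε : 0 < ε) :
    C * (|a| * √q * d) ≤ ε * (a ^ 2 * q) + C ^ 2 / (4 * ε) * d ^ 2 := by
  calc C * (|a| * √q * d) = 2 * (|a| * √q) * (C * d / 2) := by ring
    _ ≤ ε * (|a| * √q) ^ 2 + ε⁻¹ * (C * d / 2) ^ 2 := two_mul_le_add_mul_sq hε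
    _ = ε * (a ^ 2 * q) + C ^ 2 / (4 * ε) * d ^ 2 := by
      rw [mul_pow, sq_abs, Real.sq_sqrt hq]
      field_simp
      ring

section Integrability

variable [IsFiniteMeasureOnCompacts μ] {Q η : E → ℝ}

theorem integrable_sq_norm_fderiv_of_hasCompactSupport (hη : ContDiff ℝ 1 η)
    (hηc : HasCompactSupport η) : Integrable (fun x => ‖fderiv ℝ η x‖ ^ 2) μ :=
  Continuous.integrable_of_hasCompactSupport ((hη.continuous_fderiv one_ne_zero).norm.pow 2)
    ((hηc.fderiv ℝ).comp_left (g := fun L => ‖L‖ ^ 2) (by simp))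

theorem integrable_abs_mul_sqrt_mul_norm_fderiv (hQ : Continuous Q) (hη : ContDiff ℝ 1 η)
    (hηc : HasCompactSupport η) :
    Integrable (fun x => |η x| * √(Q x) * ‖fderiv ℝ η x‖) μ :=
  Continuous.integrable_of_hasCompactSupport
    ((hη.continuous.abs.mul hQ.sqrt).mul (hη.continuous_fderiv one_ne_zero).norm)
    (hηc.fderiv ℝ).norm.mul_left

theorem IsCutoff.setIntegral_ball_le [FiniteDimensional ℝ E] {R : ℝ} (hη : IsCutoff R η)
    (hQ : Continuous Q) (hQ0 : 0 ≤ Q) :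
    ∫ x in ball (0 : E) R, Q x ∂μ ≤ ∫ x, η x ^ 2 * Q x ∂μ := by
  have hint := integrable_sq_mul_of_hasCompactSupport (μ := μ) hQ hη.contDiff.continuous
    hη.hasCompactSupport
  have hball : ∫ x in ball (0 : E) R, Q x ∂μ = ∫ x in ball (0 : E) R, η x ^ 2 * Q x ∂μ :=
    setIntegral_congr_fun measurableSet_ball fun x hx => by simp [hη.eq_one_of_mem_ball x hx]
  rw [hball]
  exact setIntegral_le_integral hint (.of_forall fun x => mul_nonneg (sq_nonneg _) (hQ0 x))

end Integrability

namespace IsCaccioppoli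

variable {Q η : E → ℝ} {C : ℝ}

theorem integral_sq_mul_le [IsFiniteMeasureOnCompacts μ] (h : IsCaccioppoli μ Q C)
    (hQ : Continuous Q) (hQ0 : 0 ≤ Q) (hη : ContDiff ℝ 1 η) (hηc : HasCompactSupport η) :
    ∫ x, η x ^ 2 * Q x ∂μ ≤ C ^ 2 * ∫ x, ‖fderiv ℝ η x‖ ^ 2 ∂μ := by
  have hηQ := integrable_sq_mul_of_hasCompactSupport (μ := μ) hQ hη.continuous hηc
  have hdη := integrable_sq_norm_fderiv_of_hasCompactSupport (μ := μ) hη hηc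
  have hyoung : C * ∫ x, |η x| * √(Q x) * ‖fderiv ℝ η x‖ ∂μ
      ≤ 1 / 2 * ∫ x, η x ^ 2 * Q x ∂μ + C ^ 2 / (4 * (1 / 2)) * ∫ x, ‖fderiv ℝ η x‖ ^ 2 ∂μ := by
    simp_rw [← integral_const_mul]
    rw [← integral_add (hηQ.const_mul _) (hdη.const_mul _)]
    exact integral_mono ((integrable_abs_mul_sqrt_mul_norm_fderiv hQ hη hηc).const_mul _)
      ((hηQ.const_mul _).add (hdη.const_mul _))
      fun x => mul_abs_mul_sqrt_mul_le (hQ0 x) _ _ _ one_half_pos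
  linarith [h η hη hηc]

-- On the ball `∇η = 0`, so only the tail of `Q` enters the right-hand side.
theorem integral_sq_mul_le_setIntegral_compl_ball [IsFiniteMeasureOnCompacts μ]
    (h : IsCaccioppoli μ Q C) (hQ : Continuous Q) (hQ0 : 0 ≤ Q) (hQint : Integrable Q μ) {R : ℝ}
    (hη : IsCutoff R η) {ε : ℝ} (hε : 0 < ε) :
    ∫ x, η x ^ 2 * Q x ∂μ ≤
      ε * ∫ x in (ball (0 : E) R)ᶜ, Q x ∂μ + C ^ 2 / (4 * ε) * ∫ x, ‖fderiv ℝ η x‖ ^ 2 ∂μ := by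
  have htail := hQint.indicator (measurableSet_ball (x := (0 : E)) (ε := R)).compl
  have hdη := integrable_sq_norm_fderiv_of_hasCompactSupport (μ := μ) hη.contDiff
    hη.hasCompactSupport
  refine (h η hη.contDiff hη.hasCompactSupport).trans ?_
  rw [← integral_indicator measurableSet_ball.compl]
  simp_rw [← integral_const_mul]
  rw [← integral_add (htail.const_mul _) (hdη.const_mul _)]
  refine integral_mono ((integrable_abs_mul_sqrt_mul_norm_fderiv hQ hη.contDiff
    hη.hasCompactSupport).const_mul _) ((htail.const_mul _).add (hdη.const_mul _)) fun x => ?_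
  by_cases hx : x ∈ ball (0 : E) R
  · simp [hη.fderiv_eq_zero_of_mem_ball hx, Set.indicator_of_notMem (Set.notMem_compl_iff.2 hx)]
  · have hle : η x ^ 2 * Q x ≤ Q x :=
      mul_le_of_le_one_left (hQ0 x) ((sq_le_one_iff_abs_le_one _).2 (hη.abs_le_one x))
    simp only [Set.indicator_of_mem (Set.mem_compl hx)]
    exact (mul_abs_mul_sqrt_mul_le (hQ0 x) _ _ _ hε).trans (by gcongr)

variable [FiniteDimensional ℝ E] [μ.IsAddHaarMeasure]

theorem integrable (h : IsCaccioppoli μ Q C) (hQ : Continuous Q) (hQ0 : 0 ≤ Q)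
    (hE : finrank ℝ E ≤ 2) : Integrable Q μ := by
  obtain ⟨D, hD⟩ := exists_isCutoff_integral_sq_norm_fderiv_le μ hE
  refine (aecover_ball (x := (0 : E)) tendsto_id).integrable_of_integral_bounded_of_nonneg_ae
    (C ^ 2 * D) (fun R => ?_) (.of_forall hQ0) ?_
  · exact (hQ.locallyIntegrable.integrableOn_isCompact
      (isCompact_closedBall (0 : E) R)).mono_set ball_subset_closedBall
  · filter_upwards [eventually_ge_atTop 1] with R hR
    obtain ⟨η, hη, hηD⟩ := hD R hR
    calc ∫ x in ball (0 : E) R, Q x ∂μ ≤ ∫ x, η x ^ 2 * Q x ∂μ := hη.setIntegral_ball_le hQ hQ0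
      _ ≤ C ^ 2 * ∫ x, ‖fderiv ℝ η x‖ ^ 2 ∂μ :=
        h.integral_sq_mul_le hQ hQ0 hη.contDiff hη.hasCompactSupport
      _ ≤ C ^ 2 * D := by gcongr

theorem exists_forall_integral_le_div (h : IsCaccioppoli μ Q C) (hQ : Continuous Q) (hQ0 : 0 ≤ Q)
    (hE : finrank ℝ E ≤ 2) : ∃ K : ℝ, ∀ ε > 0, ∫ x, Q x ∂μ ≤ K / ε := by
  obtain ⟨D, hD⟩ := exists_isCutoff_integral_sq_norm_fderiv_le μ hE
  have hQint := h.integrable hQ hQ0 hE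
  have hball : Tendsto (fun R => ∫ x in ball (0 : E) R, Q x ∂μ) atTop (𝓝 (∫ x, Q x ∂μ)) :=
    (aecover_ball tendsto_id).integral_tendsto_of_countably_generated hQint
  refine ⟨C ^ 2 / 4 * D, fun ε hε => ?_⟩
  have hlim : Tendsto (fun R => ε * (∫ x, Q x ∂μ - ∫ x in ball (0 : E) R, Q x ∂μ)
      + C ^ 2 / (4 * ε) * D) atTop (𝓝 (C ^ 2 / 4 * D / ε)) := by
    convert! ((hball.const_sub _).const_mul ε).add_const (C ^ 2 / (4 * ε) * D) using 2
    field_simp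
    ring
  refine le_of_tendsto_of_tendsto hball hlim ?_
  filter_upwards [eventually_ge_atTop 1] with R hR
  obtain ⟨η, hη, hηD⟩ := hD R hR
  calc ∫ x in ball (0 : E) R, Q x ∂μ ≤ ∫ x, η x ^ 2 * Q x ∂μ := hη.setIntegral_ball_le hQ hQ0
    _ ≤ ε * ∫ x in (ball (0 : E) R)ᶜ, Q x ∂μ + C ^ 2 / (4 * ε) * ∫ x, ‖fderiv ℝ η x‖ ^ 2 ∂μ :=
      h.integral_sq_mul_le_setIntegral_compl_ball hQ hQ0 hQint hη hε
    _ ≤ ε * (∫ x, Q x ∂μ - ∫ x in ball (0 : E) R, Q x ∂μ) + C ^ 2 / (4 * ε) * D := by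
      rw [setIntegral_compl measurableSet_ball hQint]
      gcongr

theorem eq_zero (h : IsCaccioppoli μ Q C) (hQ : Continuous Q) (hQ0 : 0 ≤ Q)
    (hE : finrank ℝ E ≤ 2) : Q = 0 := by
  obtain ⟨K, hK⟩ := h.exists_forall_integral_le_div hQ hQ0 hE
  have hnonpos : ∫ x, Q x ∂μ ≤ 0 :=
    ge_of_tendsto (tendsto_const_nhds.div_atTop tendsto_id) ((eventually_gt_atTop 0).mono hK)
  have hae : Q =ᵐ[μ] 0 := (integral_eq_zero_iff_of_nonneg hQ0 (h.integrable hQ hQ0 hE)).1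
    (hnonpos.antisymm (integral_nonneg hQ0))
  exact (hQ.ae_eq_iff_eq μ continuous_const).1 hae

end IsCaccioppoli

end Liouville

section Gradient

variable {E : Type*} [NormedAddCommGroup E] [InnerProductSpace ℝ E] [CompleteSpace E] {u : E → ℝ}

theorem contDiff_gradient {m n : WithTop ℕ∞} (hu : ContDiff ℝ n u) (hmn : m + 1 ≤ n) :
    ContDiff ℝ m (gradient u) :=
  (InnerProductSpace.toDual ℝ E).symm.contDiff.comp (hu.fderiv_right hmn)

theorem norm_gradient (u : E → ℝ) (x : E) : ‖gradient u x‖ = ‖fderiv ℝ u x‖ :=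
  (InnerProductSpace.toDual ℝ E).symm.norm_map _

theorem inner_fderiv_gradient (hu : ContDiff ℝ 2 u) (x a b : E) :
    ⟪fderiv ℝ (gradient u) x a, b⟫_ℝ = fderiv ℝ (fderiv ℝ u) x a b := by
  let J := (InnerProductSpace.toDual ℝ E).symm.toContinuousLinearEquiv.toContinuousLinearMap
  have hdiff : DifferentiableAt ℝ (fderiv ℝ u) x :=
    (hu.fderiv_right le_rfl).differentiable one_ne_zero x
  have hcomp : HasFDerivAt (gradient u) (J.comp (fderiv ℝ (fderiv ℝ u) x)) x :=
    J.hasFDerivAt.comp x hdiff.hasFDerivAt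
  rw [hcomp.fderiv]
  exact InnerProductSpace.toDual_symm_apply

theorem inner_fderiv_gradient_comm (hu : ContDiff ℝ 2 u) (x a b : E) :
    ⟪fderiv ℝ (gradient u) x a, b⟫_ℝ = ⟪fderiv ℝ (gradient u) x b, a⟫_ℝ := by
  rw [inner_fderiv_gradient hu, inner_fderiv_gradient hu]
  exact hu.contDiffAt.isSymmSndFDerivAt (by simp) a b

theorem gradient_fderiv_apply (hu : ContDiff ℝ 2 u) (e x : E) :
    gradient (fun y => fderiv ℝ u y e) x = fderiv ℝ (gradient u) x e := by
  have hdiff : DifferentiableAt ℝ (fderiv ℝ u) x :=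
    (hu.fderiv_right le_rfl).differentiable one_ne_zero x
  refine ext_inner_right ℝ fun a => ?_
  rw [inner_gradient_left, fderiv_clm_apply hdiff (differentiableAt_const e),
    inner_fderiv_gradient_comm hu, inner_fderiv_gradient hu]
  simp

theorem exists_eq_clm_add_of_fderiv_gradient_eq_zero (hu : ContDiff ℝ 2 u)
    (h : ∀ x, fderiv ℝ (gradient u) x = 0) : ∃ L : E →L[ℝ] ℝ, ∀ x, u x = L x + u 0 := by
  have hu_diff : Differentiable ℝ u := hu.differentiable two_ne_zero
  have hconst := is_const_of_fderiv_eq_zero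
    ((contDiff_gradient hu le_rfl).differentiable one_ne_zero) h
  have hfderiv (x : E) : fderiv ℝ u x = fderiv ℝ u 0 := by
    rw [← toDual_gradient, hconst x 0, toDual_gradient]
  refine ⟨fderiv ℝ u 0, fun x => congrFun (eq_of_fderiv_eq (g := fun x => fderiv ℝ u 0 x + u 0)
    hu_diff (by fun_prop) (fun y => ?_) 0 (by simp)) x⟩
  rw [hfderiv, fderiv_add_const, ContinuousLinearMap.fderiv]

theorem gradient_sq_mul_comp {w η : E → ℝ} {g : ℝ → ℝ} {x : E} (hη : DifferentiableAt ℝ η x)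
    (hg : DifferentiableAt ℝ g (w x)) (hw : DifferentiableAt ℝ w x) :
    gradient (fun y => η y ^ 2 * g (w y)) x
      = (η x ^ 2 * deriv g (w x)) • gradient w x + (2 * η x * g (w x)) • gradient η x := by
  have hderiv := (hη.hasFDerivAt.pow 2).mul (hg.hasDerivAt.comp_hasFDerivAt x hw.hasFDerivAt)
  refine ext_inner_right ℝ fun a => ?_
  rw [inner_gradient_left, inner_add_left, real_inner_smul_left, real_inner_smul_left,
    inner_gradient_left, inner_gradient_left]
  refine (congrArg (fun L : E →L[ℝ] ℝ => L a) hderiv.fderiv).trans ?_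
  simp only [Function.comp_apply, Nat.add_one_sub_one, pow_one, nsmul_eq_mul, Nat.cast_ofNat,
    add_apply, smul_apply, smul_eq_mul]
  ring

end Gradient

section LinearEquation

variable {E : Type*} [NormedAddCommGroup E] [InnerProductSpace ℝ E] [CompleteSpace E]
  {B : E → E →L[ℝ] E →L[ℝ] ℝ} {w η : E → ℝ} {g : ℝ → ℝ} {K : ℝ}

/-- The energy density `g'(w) B(∇w, ∇w)` obtained by testing `div (B ∇w) = 0` with `g(w)`. -/
def energyDensity (B : E → E →L[ℝ] E →L[ℝ] ℝ) (g : ℝ → ℝ) (w : E → ℝ) (x : E) : ℝ :=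
  deriv g (w x) * B x (gradient w x) (gradient w x)

theorem continuous_energyDensity (hB : Continuous B) (hg : ContDiff ℝ 1 g) (hw : ContDiff ℝ 1 w) :
    Continuous (energyDensity B g w) := by
  have := (contDiff_gradient hw (zero_add _).le).continuous
  have := hg.continuous_deriv le_rfl
  have := hw.continuous
  unfold energyDensity
  fun_prop

theorem energyDensity_nonneg (hB0 : ∀ x a, 0 ≤ B x a a) (hg' : ∀ t, 0 ≤ deriv g t) :
    0 ≤ energyDensity B g w := fun _ => mul_nonneg (hg' _) (hB0 _ _)

theorem gradient_eq_zero_of_energyDensity_eq_zero (hB : ∀ x a, a ≠ 0 → 0 < B x a a)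
    (hg' : ∀ t, 0 < deriv g t) {x : E} (hx : energyDensity B g w x = 0) : gradient w x = 0 := by
  by_contra hne
  exact (mul_pos (hg' _) (hB x _ hne)).ne' hx

theorem abs_mul_apply_gradient_le_sqrt_energyDensity {x : E}
    (hsymm : ∀ a b, B x a b = B x b a) (hB0 : ∀ a, 0 ≤ B x a a) (hg' : 0 ≤ deriv g (w x))
    (hK : 0 ≤ K) (hBg : ‖B x‖ * g (w x) ^ 2 ≤ K * deriv g (w x)) :
    |2 * η x * g (w x) * B x (gradient w x) (gradient η x)|
      ≤ 2 * √K * (|η x| * √(energyDensity B g w x) * ‖fderiv ℝ η x‖) := by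
  have hQ : 0 ≤ energyDensity B g w x := mul_nonneg hg' (hB0 _)
  have hηη : B x (gradient η x) (gradient η x) ≤ ‖B x‖ * ‖fderiv ℝ η x‖ ^ 2 := by
    rw [← norm_gradient, sq, ← mul_assoc]
    exact (le_abs_self _).trans ((B x).le_opNorm₂ _ _)
  refine abs_le_of_sq_le_sq ?_ (by positivity)
  calc (2 * η x * g (w x) * B x (gradient w x) (gradient η x)) ^ 2
      = 4 * η x ^ 2 * g (w x) ^ 2 * B x (gradient w x) (gradient η x) ^ 2 := by ring
    _ ≤ 4 * η x ^ 2 * g (w x) ^ 2 *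
          (B x (gradient w x) (gradient w x) * (‖B x‖ * ‖fderiv ℝ η x‖ ^ 2)) := by
      gcongr
      exact ((B x).toBilinForm.apply_sq_le_of_symm hB0 ⟨hsymm⟩ _ _).trans
        (mul_le_mul_of_nonneg_left hηη (hB0 _))
    _ = 4 * η x ^ 2 * (‖B x‖ * g (w x) ^ 2) *
          (B x (gradient w x) (gradient w x) * ‖fderiv ℝ η x‖ ^ 2) := by ring
    _ ≤ 4 * η x ^ 2 * (K * deriv g (w x)) *
          (B x (gradient w x) (gradient w x) * ‖fderiv ℝ η x‖ ^ 2) := by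
      have := hB0 (gradient w x)
      gcongr
    _ = 4 * K * (η x ^ 2 * energyDensity B g w x * ‖fderiv ℝ η x‖ ^ 2) := by
      rw [energyDensity]
      ring
    _ = (2 * √K * (|η x| * √(energyDensity B g w x) * ‖fderiv ℝ η x‖)) ^ 2 := by
      simp only [mul_pow, Real.sq_sqrt hK, Real.sq_sqrt hQ, sq_abs]
      ring

variable [MeasurableSpace E] {μ : Measure E}

/-- `w` is a weak solution of the linear equation `div (B ∇w) = 0`; test functions are only required
to be `C¹`. -/
def IsWeakSolution (μ : Measure E) (B : E → E →L[ℝ] E →L[ℝ] ℝ) (w : E → ℝ) : Prop :=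
  ∀ φ : E → ℝ, ContDiff ℝ 1 φ → HasCompactSupport φ →
    ∫ x, B x (gradient w x) (gradient φ x) ∂μ = 0

variable [BorelSpace E] [IsFiniteMeasureOnCompacts μ]

theorem integrable_mul_apply_gradient (hB : Continuous B) (hw : ContDiff ℝ 1 w)
    (hg : ContDiff ℝ 1 g) (hη : ContDiff ℝ 1 η) (hηc : HasCompactSupport η) :
    Integrable (fun x => 2 * η x * g (w x) * B x (gradient w x) (gradient η x)) μ := by
  have := (contDiff_gradient hw (zero_add _).le).continuous
  have := (contDiff_gradient hη (zero_add _).le).continuous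
  have := hg.continuous
  have := hw.continuous
  have := hη.continuous
  exact Continuous.integrable_of_hasCompactSupport (by fun_prop) hηc.mul_left.mul_right.mul_right

namespace IsWeakSolution

theorem integral_sq_mul_energyDensity (h : IsWeakSolution μ B w) (hB : Continuous B)
    (hw : ContDiff ℝ 1 w) (hg : ContDiff ℝ 1 g) (hη : ContDiff ℝ 1 η) (hηc : HasCompactSupport η) :
    ∫ x, η x ^ 2 * energyDensity B g w x ∂μ
      = -∫ x, 2 * η x * g (w x) * B x (gradient w x) (gradient η x) ∂μ := by
  have hweak := h (fun x => η x ^ 2 * g (w x)) ((hη.pow 2).mul (hg.comp hw))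
    ((hηc.comp_left (g := fun t : ℝ => t ^ 2) (by simp)).mul_right)
  have hsplit (x : E) : B x (gradient w x) (gradient (fun y => η y ^ 2 * g (w y)) x)
      = η x ^ 2 * energyDensity B g w x
        + 2 * η x * g (w x) * B x (gradient w x) (gradient η x) := by
    rw [gradient_sq_mul_comp (hη.differentiable one_ne_zero x) (hg.differentiable one_ne_zero _)
      (hw.differentiable one_ne_zero x), map_add, map_smul, map_smul, smul_eq_mul, smul_eq_mul,
      energyDensity, mul_assoc]
  simp_rw [hsplit] at hweak
  rw [integral_add (integrable_sq_mul_of_hasCompactSupport (continuous_energyDensity hB hg hw)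
    hη.continuous hηc) (integrable_mul_apply_gradient hB hw hg hη hηc)] at hweak
  exact eq_neg_of_add_eq_zero_left hweak

theorem isCaccioppoli_energyDensity (h : IsWeakSolution μ B w) (hB : Continuous B)
    (hsymm : ∀ x a b, B x a b = B x b a) (hB0 : ∀ x a, 0 ≤ B x a a) (hw : ContDiff ℝ 1 w)
    (hg : ContDiff ℝ 1 g) (hg' : ∀ t, 0 ≤ deriv g t) (hK : 0 ≤ K)
    (hBg : ∀ x, ‖B x‖ * g (w x) ^ 2 ≤ K * deriv g (w x)) :
    IsCaccioppoli μ (energyDensity B g w) (2 * √K) := fun η hη hηc => by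
  rw [h.integral_sq_mul_energyDensity hB hw hg hη hηc, ← integral_neg, ← integral_const_mul]
  have hQ := continuous_energyDensity hB hg hw
  refine integral_mono (integrable_mul_apply_gradient hB hw hg hη hηc).neg
    ((integrable_abs_mul_sqrt_mul_norm_fderiv hQ hη hηc).const_mul _) fun x => ?_
  exact (neg_le_abs _).trans
    (abs_mul_apply_gradient_le_sqrt_energyDensity (hsymm x) (hB0 x) (hg' _) hK (hBg x))

theorem gradient_eq_zero {μ : Measure E} [FiniteDimensional ℝ E] [μ.IsAddHaarMeasure]
    (h : IsWeakSolution μ B w) (hE : finrank ℝ E ≤ 2) (hB : Continuous B)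
    (hsymm : ∀ x a b, B x a b = B x b a) (hpos : ∀ x a, a ≠ 0 → 0 < B x a a)
    (hw : ContDiff ℝ 1 w) (hg : ContDiff ℝ 1 g) (hg' : ∀ t, 0 < deriv g t)
    (hBg : ∀ x, ‖B x‖ * g (w x) ^ 2 ≤ K * deriv g (w x)) : gradient w = 0 := by
  have hB0 (x a : E) : 0 ≤ B x a a := by
    rcases eq_or_ne a 0 with rfl | ha
    · simp
    · exact (hpos x a ha).le
  have hg0 (t : ℝ) : 0 ≤ deriv g t := (hg' t).le
  have hK : 0 ≤ K :=
    nonneg_of_mul_nonneg_left (le_trans (by positivity) (hBg 0)) (hg' (w 0))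
  have hzero := (h.isCaccioppoli_energyDensity hB hsymm hB0 hw hg hg0 hK hBg).eq_zero
    (continuous_energyDensity hB hg hw) (energyDensity_nonneg hB0 hg0) hE
  exact funext fun x => gradient_eq_zero_of_energyDensity_eq_zero hpos hg' (congrFun hzero x)

end IsWeakSolution

end LinearEquation

section EulerLagrange

variable {ι E : Type*} [Fintype ι] [NormedAddCommGroup E] [InnerProductSpace ℝ E] {f u : E → ℝ}

theorem eq_zero_of_map_basis_eq_zero (b : OrthonormalBasis (Fin 2) ℝ E) {A : E →L[ℝ] E}
    (hA : ∀ v w, ⟪A v, w⟫_ℝ = ⟪A w, v⟫_ℝ) {B : E →L[ℝ] E →L[ℝ] ℝ} (hB : ∀ v, v ≠ 0 → 0 < B v v)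
    (hA0 : A (b 0) = 0) (htrace : ∑ i, B (A (b i)) (b i) = 0) : A = 0 := by
  have hB1 : B (A (b 1)) (b 1) = 0 := by simpa [Fin.sum_univ_two, hA0] using htrace
  have hparallel : A (b 1) = ⟪b 1, A (b 1)⟫_ℝ • b 1 := by
    have horth : ⟪b 0, A (b 1)⟫_ℝ = 0 := by rw [real_inner_comm, hA, hA0, inner_zero_left]
    simpa [Fin.sum_univ_two, horth] using (b.sum_repr' (A (b 1))).symm
  have hA1 : A (b 1) = 0 := by
    by_contra hne
    refine (hB _ hne).ne' ?_
    nth_rw 2 [hparallel]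
    rw [map_smul, hB1, smul_zero]
  refine ContinuousLinearMap.coe_injective (b.toBasis.ext fun i => ?_)
  fin_cases i <;> simp [hA0, hA1]

variable [CompleteSpace E]

/-- `u` is an extremal of the energy `∫ f(∇u)`, i.e. it solves the Euler-Lagrange equation
`div [Df(∇u)] = 0`; the divergence is computed in the orthonormal basis `b`. -/
def IsExtremal (b : OrthonormalBasis ι ℝ E) (f u : E → ℝ) : Prop :=
  ∀ x, ∑ i, fderiv ℝ (fun y => fderiv ℝ f (gradient u y) (b i)) x (b i) = 0

theorem contDiff_fderiv_gradient_apply (hf : ContDiff ℝ 2 f) (hu : ContDiff ℝ 2 u) (v : E) :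
    ContDiff ℝ 1 fun y => fderiv ℝ f (gradient u y) v :=
  ((hf.fderiv_right le_rfl).comp (contDiff_gradient hu le_rfl)).clm_apply contDiff_const

theorem fderiv_fderiv_gradient_apply (hf : ContDiff ℝ 2 f) (hu : ContDiff ℝ 2 u) (x a v : E) :
    fderiv ℝ (fun y => fderiv ℝ f (gradient u y) v) x a
      = fderiv ℝ (fderiv ℝ f) (gradient u x) (fderiv ℝ (gradient u) x a) v := by
  have hgrad := (contDiff_gradient hu le_rfl).differentiable one_ne_zero x
  have hf' := (hf.fderiv_right le_rfl).differentiable one_ne_zero (gradient u x)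
  have hcomp : HasFDerivAt (fun y => fderiv ℝ f (gradient u y))
      ((fderiv ℝ (fderiv ℝ f) (gradient u x)).comp (fderiv ℝ (gradient u) x)) x :=
    hf'.hasFDerivAt.comp x hgrad.hasFDerivAt
  rw [fderiv_clm_apply hcomp.differentiableAt (differentiableAt_const _), hcomp.fderiv]
  simp

namespace IsExtremal

theorem sum_fderiv_fderiv_apply_eq_zero {b : OrthonormalBasis ι ℝ E} (h : IsExtremal b f u)
    (hf : ContDiff ℝ 2 f) (hu : ContDiff ℝ 2 u) (x : E) :
    ∑ i, fderiv ℝ (fderiv ℝ f) (gradient u x) (fderiv ℝ (gradient u) x (b i)) (b i) = 0 := by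
  simpa only [fderiv_fderiv_gradient_apply hf hu] using h x

theorem isWeakSolution_fderiv_apply [MeasurableSpace E] [BorelSpace E] (μ : Measure E)
    [μ.IsAddHaarMeasure] {b : OrthonormalBasis ι ℝ E} (h : IsExtremal b f u) (hf : ContDiff ℝ 2 f)
    (hu : ContDiff ℝ 2 u) (e : E) :
    IsWeakSolution μ (fun x => fderiv ℝ (fderiv ℝ f) (gradient u x))
      fun x => fderiv ℝ u x e := fun φ hφ hφc => by
  have : FiniteDimensional ℝ E := b.toBasis.finiteDimensional_of_finite
  have hcoord (L : E →L[ℝ] ℝ) (x : E) : ∑ i, L (b i) * fderiv ℝ φ x (b i) = L (gradient φ x) := by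
    conv_rhs => rw [← b.sum_repr' (gradient φ x)]
    simp [mul_comm]
  have hlin := integral_sum_fderiv_mul_fderiv_eq_zero_of_div_eq_zero (μ := μ)
    (fun i => contDiff_fderiv_gradient_apply hf hu (b i)) h hφ hφc e
  simpa only [fderiv_fderiv_gradient_apply hf hu, hcoord, ← gradient_fderiv_apply hu] using hlin

theorem fderiv_gradient_eq_zero {b : OrthonormalBasis (Fin 2) ℝ E} (h : IsExtremal b f u)
    (hf : ContDiff ℝ 2 f) (hpos : ∀ p q, q ≠ 0 → 0 < fderiv ℝ (fderiv ℝ f) p q q) {Λ : ℝ}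
    (hgrow : ∀ p, ‖fderiv ℝ (fderiv ℝ f) p‖ ≤ Λ / (1 + ‖p‖)) (hu : ContDiff ℝ 2 u) {g : ℝ → ℝ}
    (hg : ContDiff ℝ 1 g) (hg' : ∀ t, 0 < deriv g t) {c : ℝ}
    (hcond : ∀ x, g (fderiv ℝ u x (b 0)) ^ 2
      ≤ c * (1 + ‖gradient u x‖) * deriv g (fderiv ℝ u x (b 0))) (x : E) :
    fderiv ℝ (gradient u) x = 0 := by
  borelize E
  have : FiniteDimensional ℝ E := b.toBasis.finiteDimensional_of_finite
  have hdim : finrank ℝ E = 2 := by simpa using finrank_eq_card_basis b.toBasis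
  have hbound (x : E) : ‖fderiv ℝ (fderiv ℝ f) (gradient u x)‖ * g (fderiv ℝ u x (b 0)) ^ 2
      ≤ Λ * c * deriv g (fderiv ℝ u x (b 0)) := by
    have hΛ : 0 ≤ Λ / (1 + ‖gradient u x‖) := le_trans (by positivity) (hgrow (gradient u x))
    calc _ ≤ Λ / (1 + ‖gradient u x‖)
          * (c * (1 + ‖gradient u x‖) * deriv g (fderiv ℝ u x (b 0))) :=
          mul_le_mul (hgrow _) (hcond x) (sq_nonneg _) hΛ
      _ = Λ * c * deriv g (fderiv ℝ u x (b 0)) := by field_simp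
  have hcont : Continuous fun x => fderiv ℝ (fderiv ℝ f) (gradient u x) :=
    ((hf.fderiv_right (m := 1) le_rfl).continuous_fderiv one_ne_zero).comp
      (contDiff_gradient (m := 1) hu le_rfl).continuous
  have hgrad : gradient (fun x => fderiv ℝ u x (b 0)) = 0 :=
    (h.isWeakSolution_fderiv_apply volume hf hu (b 0)).gradient_eq_zero hdim.le hcont
      (fun _ _ _ => hf.contDiffAt.isSymmSndFDerivAt (by simp) _ _) (fun _ => hpos _)
      ((hu.fderiv_right le_rfl).clm_apply contDiff_const) hg hg' hbound
  refine eq_zero_of_map_basis_eq_zero b (inner_fderiv_gradient_comm hu x) (hpos _) ?_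
    (h.sum_fderiv_fderiv_apply_eq_zero hf hu x)
  rw [← gradient_fderiv_apply hu, hgrad, Pi.zero_apply]

end IsExtremal

end EulerLagrange

section Profile

variable {ρ : ℝ → ℝ}

/-- The function `g` for which `η² g(w)`, with `w` the first partial derivative of `u`, is the test
function in the linearized equation, chosen so that `g² ≤ Γ^(-1/2) ρ(Γ)² / ρ'(Γ) g'` at
`Γ = 1 + t²`. -/
def profile (ρ : ℝ → ℝ) (t : ℝ) : ℝ := ρ (1 + t ^ 2) * (t / √(1 + t ^ 2))

theorem hasDerivAt_profile {t : ℝ} (hρ : DifferentiableWithinAt ℝ ρ (Set.Ici 1) (1 + t ^ 2)) :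
    HasDerivAt (profile ρ) (derivWithin ρ (Set.Ici 1) (1 + t ^ 2) * (2 * t ^ 2 / √(1 + t ^ 2))
      + ρ (1 + t ^ 2) / √(1 + t ^ 2) ^ 3) t := by
  have hΓ : 0 < 1 + t ^ 2 := by positivity
  have hsqrt : √(1 + t ^ 2) ≠ 0 := (Real.sqrt_pos.2 hΓ).ne'
  have hdΓ : HasDerivAt (fun t : ℝ => 1 + t ^ 2) (2 * t) t := by
    simpa using (hasDerivAt_pow 2 t).const_add 1
  have hdρ : HasDerivAt (fun t => ρ (1 + t ^ 2))
      (derivWithin ρ (Set.Ici 1) (1 + t ^ 2) * (2 * t)) t :=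
    hρ.hasDerivWithinAt.comp_hasDerivAt t hdΓ <|
      .of_forall fun t => Set.mem_Ici.2 (le_add_of_nonneg_right (sq_nonneg t))
  convert! hdρ.mul ((hasDerivAt_id t).div (hdΓ.sqrt hΓ.ne') hsqrt) using 1
  simp only [id, Pi.div_apply]
  field_simp
  linear_combination (-ρ (1 + t ^ 2)) * Real.sq_sqrt hΓ.le

theorem contDiff_profile (hρ : ContDiffOn ℝ 1 ρ (Set.Ici 1)) : ContDiff ℝ 1 (profile ρ) := by
  have hΓ (t : ℝ) : 0 < 1 + t ^ 2 := by positivity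
  have hρΓ : ContDiff ℝ 1 fun t : ℝ => ρ (1 + t ^ 2) :=
    contDiffOn_univ.1 (hρ.comp (g := ρ) (f := fun t : ℝ => 1 + t ^ 2) (by fun_prop)
      fun t _ => Set.mem_Ici.2 (le_add_of_nonneg_right (sq_nonneg t)))
  have hsqrt : ContDiff ℝ 1 fun t : ℝ => √(1 + t ^ 2) :=
    ContDiff.sqrt (by fun_prop) fun t => (hΓ t).ne'
  exact hρΓ.mul (contDiff_id.div hsqrt fun t => (Real.sqrt_pos.2 (hΓ t)).ne')

theorem deriv_profile_pos {t : ℝ} (hρ : DifferentiableWithinAt ℝ ρ (Set.Ici 1) (1 + t ^ 2))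
    (hρpos : 0 < ρ (1 + t ^ 2)) (hρ' : 0 < derivWithin ρ (Set.Ici 1) (1 + t ^ 2)) :
    0 < deriv (profile ρ) t := by
  rw [(hasDerivAt_profile hρ).deriv]
  have := Real.sqrt_pos.2 (by positivity : 0 < 1 + t ^ 2)
  positivity

theorem sq_profile_le {t : ℝ} (hρ : DifferentiableWithinAt ℝ ρ (Set.Ici 1) (1 + t ^ 2))
    (hρpos : 0 < ρ (1 + t ^ 2)) (hρ' : 0 < derivWithin ρ (Set.Ici 1) (1 + t ^ 2)) :
    profile ρ t ^ 2 ≤ (1 + t ^ 2) ^ (-(1 : ℝ) / 2) * ρ (1 + t ^ 2) ^ 2 /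
      derivWithin ρ (Set.Ici 1) (1 + t ^ 2) * deriv (profile ρ) t := by
  have hΓ : 0 < 1 + t ^ 2 := by positivity
  rw [(hasDerivAt_profile hρ).deriv, neg_div, Real.rpow_neg hΓ.le, ← Real.sqrt_eq_rpow, profile]
  have hs := Real.sqrt_pos.2 hΓ
  set r := ρ (1 + t ^ 2)
  set d := derivWithin ρ (Set.Ici 1) (1 + t ^ 2)
  set s := √(1 + t ^ 2)
  calc (r * (t / s)) ^ 2
      ≤ (r * (t / s)) ^ 2 + ((r * (t / s)) ^ 2 + r ^ 3 / (d * s ^ 4)) :=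
        le_add_of_nonneg_right (by positivity)
    _ = s⁻¹ * r ^ 2 / d * (d * (2 * t ^ 2 / s) + r / s ^ 3) := by
      field_simp
      ring

end Profile

section Plane

variable {f u : E2 → ℝ}

theorem ee_eq_basisFun (i : Fin 2) : ee i = EuclideanSpace.basisFun (Fin 2) ℝ i := by
  rw [ee, EuclideanSpace.basisFun_apply]

theorem pd_eq_fderiv_basisFun (u : E2 → ℝ) (i : Fin 2) (x : E2) :
    pd u i x = fderiv ℝ u x (EuclideanSpace.basisFun (Fin 2) ℝ i) := by
  rw [pd, ee_eq_basisFun]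

theorem solves.isExtremal (h : solves f u) :
    IsExtremal (EuclideanSpace.basisFun (Fin 2) ℝ) f u := by
  simpa only [IsExtremal, solves, ee_eq_basisFun] using h

theorem Hess_eq_fderiv_fderiv (f : E2 → ℝ) (p q : E2) :
    Hess f p q = fderiv ℝ (fderiv ℝ f) p q q := by
  simp [Hess, iteratedFDeriv_two_apply]

theorem norm_fderiv_fderiv_eq_norm_iteratedFDeriv_two {𝕜 E F : Type*} [NontriviallyNormedField 𝕜]
    [NormedAddCommGroup E] [NormedSpace 𝕜 E] [NormedAddCommGroup F] [NormedSpace 𝕜 F] (f : E → F)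
    (x : E) : ‖fderiv 𝕜 (fderiv 𝕜 f) x‖ = ‖iteratedFDeriv 𝕜 2 f x‖ := by
  rw [← norm_iteratedFDeriv_fderiv, norm_iteratedFDeriv_one]

theorem clm_apply_eq_coordinates (L : E2 →L[ℝ] ℝ) (x : E2) :
    L x = L (ee 0) * x 0 + L (ee 1) * x 1 := by
  conv_lhs => rw [← (EuclideanSpace.basisFun (Fin 2) ℝ).sum_repr x]
  simp [Fin.sum_univ_two, ee, mul_comm]

theorem abs_pd_le_norm_gradient (u : E2 → ℝ) (i : Fin 2) (x : E2) :
    |pd u i x| ≤ ‖gradient u x‖ := by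
  rw [pd, ← inner_gradient_left]
  simpa [ee] using abs_real_inner_le_norm (gradient u x) (ee i)

theorem mul_rpow_one_add_sq_pd_le (c : ℝ) (u : E2 → ℝ) (i : Fin 2) (x : E2) :
    c * (1 + pd u i x ^ 2) ^ ((1 : ℝ) / 2) ≤ |c| * (1 + ‖gradient u x‖) := by
  have hsqrt : √(1 + pd u i x ^ 2) ≤ 1 + ‖gradient u x‖ := by
    refine Real.sqrt_le_iff.2 ⟨by positivity, ?_⟩
    have := sq_le_sq₀ (abs_nonneg _) (norm_nonneg _) |>.2 (abs_pd_le_norm_gradient u i x)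
    rw [sq_abs] at this
    linarith [norm_nonneg (gradient u x)]
  rw [← Real.sqrt_eq_rpow]
  exact mul_le_mul (le_abs_self c) hsqrt (Real.sqrt_nonneg _) (abs_nonneg c)

end Plane

theorem statement16_general (f u : E2 → ℝ) (hf : ContDiff ℝ 2 f)
    (hpos : ∀ p q : E2, q ≠ 0 → 0 < Hess f p q) (Λ : ℝ)
    (hgrow : ∀ p : E2, ‖iteratedFDeriv ℝ 2 f p‖ ≤ Λ / (1 + ‖p‖))
    (ρ : ℝ → ℝ) (hρC1 : ContDiffOn ℝ 1 ρ (Set.Ici 1)) (hρpos : ∀ t : ℝ, 1 ≤ t → 0 < ρ t)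
    (hρ' : ∀ t : ℝ, 1 ≤ t → 0 < derivWithin ρ (Set.Ici 1) t)
    (hu : ContDiff ℝ 2 u) (heq : solves f u) (c : ℝ)
    (hcond : ∀ x : E2,
      (1 + pd u 0 x ^ 2) ^ (-(1 : ℝ) / 2) * ρ (1 + pd u 0 x ^ 2) ^ 2 /
          derivWithin ρ (Set.Ici 1) (1 + pd u 0 x ^ 2)
        ≤ c * (1 + ‖gradient u x‖)) :
    ∃ a b c : ℝ, ∀ x : E2, u x = a * x 0 + b * x 1 + c := by
  simp_rw [Hess_eq_fderiv_fderiv] at hpos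
  simp_rw [← norm_fderiv_fderiv_eq_norm_iteratedFDeriv_two] at hgrow
  have hΓ (t : ℝ) : 1 ≤ 1 + t ^ 2 := le_add_of_nonneg_right (sq_nonneg t)
  have hρd (t : ℝ) := hρC1.differentiableOn one_ne_zero (1 + t ^ 2) (hΓ t)
  have hg' (t : ℝ) : 0 < deriv (profile ρ) t :=
    deriv_profile_pos (hρd t) (hρpos _ (hΓ t)) (hρ' _ (hΓ t))
  have hg (x : E2) : profile ρ (pd u 0 x) ^ 2
      ≤ c * (1 + ‖gradient u x‖) * deriv (profile ρ) (pd u 0 x) :=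
    (sq_profile_le (hρd _) (hρpos _ (hΓ _)) (hρ' _ (hΓ _))).trans
      (mul_le_mul_of_nonneg_right (hcond x) (hg' _).le)
  simp_rw [pd_eq_fderiv_basisFun] at hg
  obtain ⟨L, hL⟩ := exists_eq_clm_add_of_fderiv_gradient_eq_zero hu
    (heq.isExtremal.fderiv_gradient_eq_zero hf hpos hgrow hu (contDiff_profile hρC1) hg' hg)
  exact ⟨L (ee 0), L (ee 1), u 0, fun x => by rw [hL, clm_apply_eq_coordinates]⟩

theorem statement16 (f u : E2 → ℝ)
    (hf : ContDiff ℝ 2 f)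
    (hpos : ∀ p q : E2, q ≠ 0 → 0 < Hess f p q)
    (Lam : ℝ) (hLam : 0 < Lam)
    (hgrow : ∀ p : E2, ‖iteratedFDeriv ℝ 2 f p‖ ≤ Lam / (1 + ‖p‖))
    (ρ : ℝ → ℝ) (hρC1 : ContDiffOn ℝ 1 ρ (Set.Ici 1))
    (hρpos : ∀ t : ℝ, 1 ≤ t → 0 < ρ t)
    (hρ' : ∀ t : ℝ, 1 ≤ t → 0 < derivWithin ρ (Set.Ici 1) t)
    (hρmono : ∀ t : ℝ, 1 ≤ t → derivWithin (fun s => ρ s / Real.sqrt s) (Set.Ici 1) t ≤ 0)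
    (hu : ContDiff ℝ 2 u) (heq : solves f u)
    (c : ℝ)
    (hcond : ∀ x : E2,
      (1 + (pd u 0 x) ^ 2) ^ (-(1:ℝ)/2) * (ρ (1 + (pd u 0 x) ^ 2)) ^ 2 /
          derivWithin ρ (Set.Ici 1) (1 + (pd u 0 x) ^ 2)
        ≤ c * (1 + (pd u 1 x) ^ 2) ^ ((1:ℝ)/2)) :
    ∃ a b c : ℝ, ∀ x : E2, u x = a * x 0 + b * x 1 + c :=
  statement16_general f u hf hpos Lam hgrow ρ hρC1 hρpos hρ' hu heq |c| fun x =>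
    (hcond x).trans (mul_rpow_one_add_sq_pd_le c u 1 x)
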